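/- (Inequality (1.32)) Let ν ≥ 3 and M ≥ 1. For simple random walk on ℤ^ν started at e_1 (the first canonical basis vector), limsup_{N→∞} Q_{e_1}[H_{Nℤ^ν} < M N²] ≤ q(ν), where H_{Nℤ^ν} is the entrance time into the sublattice Nℤ^ν. Equivalently, the probability that simple random walk on the torus (ℤ/Nℤ)^ν started at the (image of the) point e_1 hits the origin before time MN² has limsup at most q(ν) as N → ∞. -/

import Mathlib

open MeasureTheory Filter
open scoped ENNReal Classical

namespace DiscCyl

/-- The lattice `ℤ^{d+1}`. -/
abbrev Lat (d : ℕ) := Fin (d + 1) → ℤ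

/-- The discrete cylinder `E = (ℤ/Nℤ)^d × ℤ`. -/
abbrev Cyl (d N : ℕ) := (Fin d → ZMod N) × ℤ

instance (N : ℕ) : MeasurableSpace (ZMod N) := ⊤

instance (N : ℕ) : Countable (ZMod N) := by
  cases N with
  | zero => exact inferInstanceAs (Countable ℤ)
  | succ n => exact inferInstanceAs (Countable (Fin (n + 1)))

/-- The canonical projection `π_E : ℤ^{d+1} → E`. -/
def projE (d N : ℕ) (v : Lat d) : Cyl d N :=
  (fun i => (v i.castSucc : ZMod N), v (Fin.last d))

/-- The `2(d+1)` unit vectors `±e_i` of `ℤ^{d+1}`. -/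
def unitVecs (d : ℕ) : Finset (Lat d) :=
  Finset.image (fun p : Fin (d + 1) × Bool => Pi.single p.1 (if p.2 then (1 : ℤ) else -1))
    Finset.univ

/-- One-step transition probability of simple random walk on the cylinder:
each of the `2(d+1)` unit moves of `ℤ^{d+1}` is taken with probability `1/(2(d+1))`
and projected to `E`. -/
noncomputable def stepProb (d N : ℕ) (x y : Cyl d N) : ℝ≥0∞ :=
  (((unitVecs d).filter fun e => x + projE d N e = y).card : ℝ≥0∞) / (2 * (d + 1))

/-- `Pl` is the family of laws (indexed by the starting point) of simple random walk
on the cylinder `E = (ℤ/Nℤ)^d × ℤ`. -/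
def IsCylRW (d N : ℕ) (Pl : Cyl d N → Measure (ℕ → Cyl d N)) : Prop :=
  (∀ x, IsProbabilityMeasure (Pl x)) ∧
    ∀ (x : Cyl d N) (n : ℕ) (γ : ℕ → Cyl d N),
      Pl x {ω | ∀ i ≤ n, ω i = γ i} =
        (if γ 0 = x then 1 else 0) * ∏ i ∈ Finset.range n, stepProb d N (γ i) (γ (i + 1))

/-- The lattice `ℤ^ν`. -/
abbrev ZLat (ν : ℕ) := Fin ν → ℤ

/-- Unit vectors of `ℤ^ν`. -/
def zUnitVecs (ν : ℕ) : Set (ZLat ν) :=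
  {v | ∃ i, v = Pi.single i 1 ∨ v = Pi.single i (-1)}

/-- One-step transition probability of simple random walk on `ℤ^ν`. -/
noncomputable def zStep (ν : ℕ) (x y : ZLat ν) : ℝ≥0∞ :=
  if y - x ∈ zUnitVecs ν then (2 * ν : ℝ≥0∞)⁻¹ else 0

/-- `Ql` is the family of laws of simple random walk on `ℤ^ν`. -/
def IsLatRW (ν : ℕ) (Ql : ZLat ν → Measure (ℕ → ZLat ν)) : Prop :=
  (∀ x, IsProbabilityMeasure (Ql x)) ∧
    ∀ (x : ZLat ν) (n : ℕ) (γ : ℕ → ZLat ν),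
      Ql x {ω | ∀ i ≤ n, ω i = γ i} =
        (if γ 0 = x then 1 else 0) * ∏ i ∈ Finset.range n, zStep ν (γ i) (γ (i + 1))

/-- `q(ν)`: the return probability to the origin of simple random walk on `ℤ^ν`. -/
noncomputable def retProb (ν : ℕ) (Ql : ZLat ν → Measure (ℕ → ZLat ν)) : ℝ :=
  ((Ql 0) {ω | ∃ n : ℕ, 1 ≤ n ∧ ω n = 0}).toReal

/-- Entrance time `H_U` (with value `⊤` if `U` is never entered). -/
noncomputable def entT {X : Type*} (U : Set X) (ω : ℕ → X) : ℕ∞ :=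
  sInf {t : ℕ∞ | ∃ n : ℕ, ω n ∈ U ∧ t = n}

/-- Exit time `T_U`. -/
noncomputable def exitT {X : Type*} (U : Set X) (ω : ℕ → X) : ℕ∞ :=
  entT Uᶜ ω

/-- `after t f ω = t + f (θ_t ω)`, with value `⊤` when `t = ⊤`. -/
noncomputable def after {X : Type*} (t : ℕ∞) (f : (ℕ → X) → ℕ∞) (ω : ℕ → X) : ℕ∞ :=
  t.recTopCoe ⊤ fun m => (m : ℕ∞) + f fun k => ω (k + m)

/-- The block `C_j = (ℤ/Nℤ)^d × ([(j-3/4)N, (j+3/4)N] ∩ ℤ)`. -/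
def Cblk (d N : ℕ) (j : ℤ) : Set (Cyl d N) :=
  {x | ((j : ℝ) - 3 / 4) * N ≤ (x.2 : ℝ) ∧ (x.2 : ℝ) ≤ ((j : ℝ) + 3 / 4) * N}

/-- The block `B_j = (ℤ/Nℤ)^d × [(j-1)N, (j+1)N]`. -/
def Bblk (d N : ℕ) (j : ℤ) : Set (Cyl d N) :=
  {x | (j - 1) * (N : ℤ) ≤ x.2 ∧ x.2 ≤ (j + 1) * (N : ℤ)}

/-- The block `B̃_j = (ℤ/Nℤ)^d × [(j-2)N+1, (j+2)N-1]`. -/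
def Btl (d N : ℕ) (j : ℤ) : Set (Cyl d N) :=
  {x | (j - 2) * (N : ℤ) + 1 ≤ x.2 ∧ x.2 ≤ (j + 2) * (N : ℤ) - 1}

/-- `D^j_1`: time of the first departure from `B̃_j` after the first return to `B_j`. -/
noncomputable def oneExc (d N : ℕ) (j : ℤ) (ω : ℕ → Cyl d N) : ℕ∞ :=
  after (entT (Bblk d N j) ω) (exitT (Btl d N j)) ω

/-- `D^j_k`: time of the `k`-th departure from `B̃_j` (after successive returns to `B_j`). -/
noncomputable def DD (d N : ℕ) (j : ℤ) : ℕ → (ℕ → Cyl d N) → ℕ∞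
  | 0, _ => 0
  | k + 1, ω => after (DD d N j k ω) (oneExc d N j) ω

/-- The law `P` of the walk with initial distribution uniform on `B_0`. -/
noncomputable def lawP (d N : ℕ) (Pl : Cyl d N → Measure (ℕ → Cyl d N)) :
    Measure (ℕ → Cyl d N) :=
  ((N : ℝ≥0∞) ^ d * (2 * N + 1))⁻¹ •
    Measure.sum fun x : Cyl d N => if x ∈ Bblk d N 0 then Pl x else 0

/-- Nearest-neighbour adjacency on the cylinder. -/
def adj (d N : ℕ) (x y : Cyl d N) : Prop :=
  x ≠ y ∧ ∃ e ∈ unitVecs d, y = x + projE d N e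

/-- `x` and `y` are connected by a nearest-neighbour path inside `S`. -/
def connIn (d N : ℕ) (S : Set (Cyl d N)) (x y : Cyl d N) : Prop :=
  Relation.ReflTransGen (fun a b => a ∈ S ∧ b ∈ S ∧ adj d N a b) x y

/-- `S` is a connected set. -/
def IsConnIn (d N : ℕ) (S : Set (Cyl d N)) : Prop :=
  ∀ x ∈ S, ∀ y ∈ S, connIn d N S x y

/-- The boundary `∂U`. -/
def bdry (d N : ℕ) (U : Set (Cyl d N)) : Set (Cyl d N) :=
  {x | x ∉ U ∧ ∃ y ∈ U, adj d N x y}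

/-- `ℓ^∞`-norm on `ℤ^{d+1}`. -/
def linf {d : ℕ} (v : Lat d) : ℕ := Finset.univ.sup fun i => (v i).natAbs

/-- `ℓ^∞`-distance induced on the cylinder. -/
noncomputable def cylDist (d N : ℕ) (x y : Cyl d N) : ℕ :=
  sInf {r : ℕ | ∃ v : Lat d, projE d N v = y - x ∧ linf v = r}

/-- `S` has `ℓ^∞`-diameter at least `L`. -/
def diamGE (d N : ℕ) (S : Set (Cyl d N)) (L : ℕ) : Prop :=
  ∃ x ∈ S, ∃ y ∈ S, L ≤ cylDist d N x y

/-- `X_{[0,n]}`: the set of points visited up to time `n`. -/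
def ran {X : Type*} (ω : ℕ → X) (n : ℕ) : Set X := {y | ∃ i ≤ n, ω i = y}

/-- The set of points visited up to the (possibly infinite) time `t`. -/
def ranE {X : Type*} (ω : ℕ → X) (t : ℕ∞) : Set X :=
  {y | ∃ i : ℕ, (i : ℕ∞) ≤ t ∧ ω i = y}

/-- `L_m`: projections to `E` of `m`-dimensional affine coordinate lattices of `ℤ^{d+1}`. -/
def Lcoll (d N m : ℕ) : Set (Set (Cyl d N)) :=
  {F | ∃ I : Finset (Fin (d + 1)), I.card = m ∧ ∃ y : Lat d,
      F = (fun v => projE d N (y + v)) '' {v : Lat d | ∀ i ∉ I, v i = 0}}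

/-- `A^j_m`: nonempty subsets of `C_j` contained in some `F ∈ L_m`. -/
def Adm (d N : ℕ) (j : ℤ) (m : ℕ) : Set (Finset (Cyl d N)) :=
  {A | A.Nonempty ∧ ↑A ⊆ Cblk d N j ∧ ∃ F ∈ Lcoll d N m, (↑A : Set (Cyl d N)) ⊆ F}

/-- The segment `{x + k·e : 0 ≤ k ≤ L}` (addition via `π_E`). -/
def segment (d N : ℕ) (x : Cyl d N) (e : Lat d) (L : ℕ) : Set (Cyl d N) :=
  {y | ∃ k : ℕ, k ≤ L ∧ y = x + projE d N ((k : ℤ) • e)}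

/-- The event `V_{K,j,t}` (with `k = ⌊t⌋` excursions). -/
def Vev (d N : ℕ) (K : ℝ) (j : ℤ) (k : ℕ) : Set (ℕ → Cyl d N) :=
  {ω | ∀ x ∈ Cblk d N j, ∀ e ∈ unitVecs d, ∃ i : ℕ, (i : ℝ) < Real.sqrt N ∧
      ∀ l : ℕ, i ≤ l → l ≤ i + ⌊K * Real.log N⌋₊ →
        x + projE d N ((l : ℤ) • e) ∉ ranE ω (DD d N j k ω)}

/-- The event `U_{K,j,t}` (with `k = ⌊t⌋` excursions). -/
def Uev (d N : ℕ) (K : ℝ) (j : ℤ) (k : ℕ) : Set (ℕ → Cyl d N) :=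
  {ω | ∀ F ∈ Lcoll d N 2, ∀ n : ℕ, (n : ℕ∞) ≤ DD d N j k ω →
      ∀ O₁ O₂ : Set (Cyl d N),
        O₁ ⊆ (F ∩ Cblk d N j) \ ran ω n → O₂ ⊆ (F ∩ Cblk d N j) \ ran ω n →
        IsConnIn d N O₁ → IsConnIn d N O₂ →
        diamGE d N O₁ ⌊K * Real.log N⌋₊ → diamGE d N O₂ ⌊K * Real.log N⌋₊ →
        ∀ p ∈ O₁, ∀ q ∈ O₂, connIn d N ((F ∩ Cblk d N j) \ ran ω n) p q}

/-- A (finite) set `S` disconnects the cylinder. -/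
def Disconnects (d N : ℕ) (S : Set (Cyl d N)) : Prop :=
  S.Finite ∧ ∃ M₀ : ℕ, ∀ M : ℕ, M₀ ≤ M → ∀ x y : Cyl d N,
    (M : ℤ) ≤ x.2 → y.2 ≤ -(M : ℤ) → ¬ connIn d N Sᶜ x y

/-- The disconnection time `T_N`. -/
noncomputable def discT (d N : ℕ) (ω : ℕ → Cyl d N) : ℕ∞ :=
  sInf {t : ℕ∞ | ∃ n : ℕ, Disconnects d N (ran ω n) ∧ t = n}

/-- `r ≤ t` for `t : ℕ∞` and a real threshold `r` (trivially true when `t = ⊤`). -/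
def geReal (t : ℕ∞) (r : ℝ) : Prop := ∀ n : ℕ, t = (n : ℕ∞) → r ≤ n

/-- `r < t` for `t : ℕ∞` and a real threshold `r` (trivially true when `t = ⊤`). -/
def gtReal (t : ℕ∞) (r : ℝ) : Prop := ∀ n : ℕ, t = (n : ℕ∞) → r < n

/-- `φ_j(z) = E_z[exp(λ Σ_{x∈A} 1{H_x < T_{B̃_j}})]`. -/
noncomputable def phi (d N : ℕ) (Pl : Cyl d N → Measure (ℕ → Cyl d N)) (j : ℤ) (lam : ℝ)
    (A : Finset (Cyl d N)) (z : Cyl d N) : ℝ :=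
  ∫ ω, Real.exp (lam * ∑ x ∈ A, if entT {x} ω < exitT (Btl d N j) ω then (1 : ℝ) else 0)
    ∂(Pl z)

/-- `‖φ_j‖_∞`. -/
noncomputable def phiSup (d N : ℕ) (Pl : Cyl d N → Measure (ℕ → Cyl d N)) (j : ℤ) (lam : ℝ)
    (A : Finset (Cyl d N)) : ℝ :=
  ⨆ z : Cyl d N, phi d N Pl j lam A z

/-- `q_N = sup {P_z[H_F < T_{B̃_j}] : F ∈ L_m, z ∈ ∂F}`. -/
noncomputable def qNval (d N m : ℕ) (Pl : Cyl d N → Measure (ℕ → Cyl d N)) (j : ℤ) : ℝ :=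
  sSup {r : ℝ | ∃ F ∈ Lcoll d N m, ∃ z ∈ bdry d N F,
      r = ((Pl z) {ω | entT F ω < exitT (Btl d N j) ω}).toReal}

/-- The times `τ_k`: `τ_0` is the entrance time of `(ℤ/Nℤ)^d × Nℤ`, and `τ_{k+1}` is the
first time after `τ_k` at which the vertical component has moved by exactly `N`. -/
noncomputable def tauT (d N : ℕ) : ℕ → (ℕ → Cyl d N) → ℕ∞
  | 0, ω => entT {x : Cyl d N | (N : ℤ) ∣ x.2} ω
  | k + 1, ω =>
      (tauT d N k ω).recTopCoe ⊤ fun m =>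
        sInf {t : ℕ∞ | ∃ n : ℕ, m < n ∧ ((ω n).2 - (ω m).2).natAbs = N ∧ t = n}

/-- `*`-adjacency on `ℤ²`. -/
def starAdj (x y : ℤ × ℤ) : Prop :=
  x ≠ y ∧ (x.1 - y.1).natAbs ≤ 1 ∧ (x.2 - y.2).natAbs ≤ 1

/-!
By the Markov property and the symmetries of `ℤ^ν`, the return probability `q(ν)` is the probability
that the walk started at a unit vector ever hits the origin, so it suffices to show that hitting a
nonzero point of `Nℤ^ν` before time `M N²` has vanishing probability. Fourier inversion on the torus
`(ℤ/Nℤ)^ν`, together with `|cos θ| ≤ exp (-sin² θ / 2)` and a comparison with a Gaussian integral,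
gives `Q_x[X_n ∈ Nℤ^ν] ≤ (C / √n)^ν` for `1 ≤ n < M N²`, with `C` independent of `N`. This bound
is summable in `n` because `ν ≥ 3`, while for fixed `n` the probability that `X_n` is a nonzero
point of `Nℤ^ν` tends to `0`; dominated convergence concludes.
-/

section PathSpace

variable {E : Type*}

/-- The time shift `θ` of a path: `(θ ω)_n = ω_{n+1}`. -/
def pathShift (ω : ℕ → E) : ℕ → E := fun n => ω (n + 1)

variable [MeasurableSpace E]

lemma measurable_pathShift : Measurable (pathShift : (ℕ → E) → ℕ → E) :=
  measurable_pi_lambda _ fun n => measurable_pi_apply (n + 1)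

lemma measurable_comp_path {F : Type*} [MeasurableSpace F] {g : E → F} (hg : Measurable g) :
    Measurable fun ω : ℕ → E => g ∘ ω :=
  measurable_pi_lambda _ fun n => hg.comp (measurable_pi_apply n)

variable [MeasurableSingletonClass E]

lemma measurableSet_cylinder (n : ℕ) (γ : ℕ → E) :
    MeasurableSet {ω : ℕ → E | ∀ i ≤ n, ω i = γ i} := by
  measurability

lemma measure_eq_of_forall_cylinder [Countable E] {μ μ' : Measure (ℕ → E)} [IsFiniteMeasure μ]
    (h : ∀ (n : ℕ) (γ : ℕ → E),
      μ {ω | ∀ i ≤ n, ω i = γ i} = μ' {ω | ∀ i ≤ n, ω i = γ i}) :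
    μ = μ' := by
  let marginal (I : Finset ℕ) : Measure (I → E) := μ.map I.restrict
  have hproj : IsProjectiveMeasureFamily (α := fun _ => E) marginal := fun I J hJI =>
    (Measure.map_map (Finset.measurable_restrict₂ hJI) (Finset.measurable_restrict I)).symm
  refine IsProjectiveLimit.unique (P := marginal) (fun _ => rfl) ?_
  refine (isProjectiveLimit_nat_iff hproj μ').2 fun n => Measure.ext_of_singleton fun γ => ?_
  have hpre : Preorder.frestrictLe (π := fun _ => E) n ⁻¹' {γ} =
      {ω : ℕ → E | ∀ i ≤ n, ω i = γ ⟨min i n, Finset.mem_Iic.2 (min_le_right i n)⟩} := by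
    ext ω
    simp +contextual [funext_iff]
  rw [Measure.map_apply (Preorder.measurable_frestrictLe n) (measurableSet_singleton γ), hpre, ← h,
    ← hpre]
  exact (Measure.map_apply (Preorder.measurable_frestrictLe n) (measurableSet_singleton γ)).symm

end PathSpace

section MarkovFamily

variable {E : Type*} [MeasurableSpace E] [DecidableEq E]

/-- `P` is the family of laws, indexed by the starting point, of the Markov chain with transition
probabilities `p`, encoded by its finite-dimensional distributions. -/
def IsMarkovFamily (p : E → E → ℝ≥0∞) (P : E → Measure (ℕ → E)) : Prop :=
  (∀ x, IsProbabilityMeasure (P x)) ∧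
    ∀ (x : E) (n : ℕ) (γ : ℕ → E),
      P x {ω | ∀ i ≤ n, ω i = γ i} =
        (if γ 0 = x then 1 else 0) * ∏ i ∈ Finset.range n, p (γ i) (γ (i + 1))

variable [MeasurableSingletonClass E] {p : E → E → ℝ≥0∞} {P : E → Measure (ℕ → E)}

lemma IsMarkovFamily.ae_apply_zero_eq (hP : IsMarkovFamily p P) (x : E) :
    ∀ᵐ ω ∂P x, ω 0 = x := by
  have := hP.1 x
  have hmeas : MeasurableSet {ω : ℕ → E | ω 0 = x} :=
    measurable_pi_apply (X := fun _ => E) 0 (measurableSet_singleton x)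
  refine (mem_ae_iff_prob_eq_one hmeas).2 ?_
  simpa using hP.2 x 0 fun _ => x

variable [Countable E]

lemma IsMarkovFamily.map_pathShift (hP : IsMarkovFamily p P) (x : E) :
    (P x).map pathShift = Measure.sum fun y => p x y • P y := by
  have := hP.1 x
  refine measure_eq_of_forall_cylinder fun n γ => ?_
  have hmeas := measurableSet_cylinder n γ
  let γ' : ℕ → E := fun i => i.casesOn x γ
  have hshift : pathShift ⁻¹' {ω | ∀ i ≤ n, ω i = γ i} =ᵐ[P x] {ω | ∀ i ≤ n + 1, ω i = γ' i} := by
    filter_upwards [hP.ae_apply_zero_eq x] with ω hω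
    refine propext ⟨fun h i hi => ?_, fun h i hi => h (i + 1) (by omega)⟩
    cases i with
    | zero => exact hω
    | succ i => exact h i (by omega)
  rw [Measure.map_apply measurable_pathShift hmeas, measure_congr hshift, hP.2,
    Measure.sum_apply _ hmeas, tsum_eq_single (γ 0) fun y hy => by
      simp [hP.2, hy.symm], Measure.smul_apply, hP.2, Finset.prod_range_succ']
  simp [γ', mul_comm]

lemma IsMarkovFamily.map_equiv (hP : IsMarkovFamily p P) (g : E ≃ E)
    (hg : ∀ x y, p (g x) (g y) = p x y) (x : E) :
    (P x).map (fun ω => g ∘ ω) = P (g x) := by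
  have := hP.1 x
  have hmeas : Measurable fun ω : ℕ → E => g ∘ ω :=
    measurable_comp_path (measurable_of_countable g)
  refine measure_eq_of_forall_cylinder fun n γ => ?_
  have hpre : (fun ω => g ∘ ω) ⁻¹' {ω | ∀ i ≤ n, ω i = γ i} =
      {ω | ∀ i ≤ n, ω i = (g.symm ∘ γ) i} := by
    ext ω
    simp [Equiv.eq_symm_apply]
  rw [Measure.map_apply hmeas (measurableSet_cylinder n γ), hpre, hP.2, hP.2]
  have hsymm (y z : E) : p (g.symm y) (g.symm z) = p y z := by
    rw [← hg, g.apply_symm_apply, g.apply_symm_apply]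
  simp [hsymm, Equiv.symm_apply_eq]

end MarkovFamily

section LatticeWalk

variable {ν : ℕ}

/-- The unit vector `± e_i`, so that a sum over the `2ν` unit vectors becomes a sum over
`Fin ν × ℤˣ`. -/
def unitVec (u : Fin ν × ℤˣ) : ZLat ν := Pi.single u.1 (u.2 : ℤ)

lemma unitVec_injective : Function.Injective (unitVec : Fin ν × ℤˣ → ZLat ν) := by
  rintro ⟨i, ε⟩ ⟨j, δ⟩ h
  have hi := congrFun h i
  rcases eq_or_ne i j with rfl | hij
  · simpa [unitVec, Units.ext_iff] using hi
  · simp [unitVec, hij] at hi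

lemma zUnitVecs_eq_range : zUnitVecs ν = Set.range unitVec := by
  ext v
  constructor
  · rintro ⟨i, rfl | rfl⟩
    exacts [⟨(i, 1), rfl⟩, ⟨(i, -1), rfl⟩]
  · rintro ⟨⟨i, ε⟩, rfl⟩
    obtain rfl | rfl := Int.units_eq_one_or ε
    exacts [⟨i, Or.inl rfl⟩, ⟨i, Or.inr rfl⟩]

variable {Q : ZLat ν → Measure (ℕ → ZLat ν)}

lemma IsLatRW.isMarkovFamily (hQ : IsLatRW ν Q) : IsMarkovFamily (zStep ν) Q := hQ

lemma IsLatRW.map_pathShift (hQ : IsLatRW ν Q) (x : ZLat ν) :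
    (Q x).map pathShift = (2 * ν : ℝ≥0∞)⁻¹ • ∑ u, Q (x + unitVec u) := by
  refine (hQ.isMarkovFamily.map_pathShift x).trans (Measure.ext fun S hS => ?_)
  have hinj : Function.Injective fun u => x + unitVec u :=
    (add_right_injective x).comp unitVec_injective
  have hsupp : Function.support (fun y => zStep ν x y * Q y S) ⊆
      Set.range fun u => x + unitVec u := fun y hy => by
    have hstep : y - x ∈ zUnitVecs ν := by
      by_contra h
      simp [zStep, h] at hy
    obtain ⟨u, hu⟩ := zUnitVecs_eq_range ▸ hstep
    exact ⟨u, by simp [hu]⟩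
  simp only [Measure.sum_apply _ hS, Measure.smul_apply, Measure.finsetSum_apply, smul_eq_mul,
    Finset.mul_sum]
  rw [← hinj.tsum_eq hsupp, tsum_fintype]
  simp [zStep, zUnitVecs_eq_range]

lemma IsLatRW.map_addEquiv (hQ : IsLatRW ν Q) (g : ZLat ν ≃+ ZLat ν)
    (hg : ∀ v, g v ∈ zUnitVecs ν ↔ v ∈ zUnitVecs ν) (x : ZLat ν) :
    (Q x).map (fun ω => g ∘ ω) = Q (g x) :=
  hQ.isMarkovFamily.map_equiv g.toEquiv
    (fun y z => by
      have hyz : g z - g y ∈ zUnitVecs ν ↔ z - y ∈ zUnitVecs ν := by rw [← map_sub, hg]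
      exact if_congr hyz rfl rfl) x

lemma measurableSet_apply_mem (n : ℕ) (U : Set (ZLat ν)) :
    MeasurableSet {ω : ℕ → ZLat ν | ω n ∈ U} :=
  measurable_pi_apply n U.to_countable.measurableSet

lemma measurableSet_hit_zero : MeasurableSet {ω : ℕ → ZLat ν | ∃ n, ω n = 0} := by
  measurability

lemma IsLatRW.measure_hit_zero_addEquiv (hQ : IsLatRW ν Q) (g : ZLat ν ≃+ ZLat ν)
    (hg : ∀ v, g v ∈ zUnitVecs ν ↔ v ∈ zUnitVecs ν) (x : ZLat ν) :
    Q (g x) {ω | ∃ n, ω n = 0} = Q x {ω | ∃ n, ω n = 0} := by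
  rw [← hQ.map_addEquiv g hg, Measure.map_apply (measurable_comp_path (measurable_of_countable g))
    measurableSet_hit_zero]
  simp

/-- The automorphism of `ℤ^ν` exchanging the coordinates `i` and `j` and multiplying all
coordinates by the sign `ε`. -/
def signedSwap (i j : Fin ν) (ε : ℤˣ) : ZLat ν ≃+ ZLat ν :=
  (LinearEquiv.funCongrLeft ℤ ℤ (Equiv.swap i j)).toAddEquiv.trans
    (DistribMulAction.toAddEquiv (ZLat ν) ε)

lemma signedSwap_unitVec (i j k : Fin ν) (ε δ : ℤˣ) :
    signedSwap i j ε (unitVec (k, δ)) = unitVec (Equiv.swap i j k, ε * δ) := by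
  ext l
  simp [signedSwap, unitVec, Pi.single_apply, LinearMap.funLeft, Units.smul_def,
    Equiv.swap_apply_eq_iff]

lemma signedSwap_mem_zUnitVecs_iff (i j : Fin ν) (ε : ℤˣ) (v : ZLat ν) :
    signedSwap i j ε v ∈ zUnitVecs ν ↔ v ∈ zUnitVecs ν := by
  rw [zUnitVecs_eq_range]
  constructor
  · rintro ⟨⟨k, δ⟩, hk⟩
    refine ⟨(Equiv.swap i j k, ε * δ), (signedSwap i j ε).injective ?_⟩
    rw [signedSwap_unitVec, Equiv.swap_apply_self, ← mul_assoc, Int.units_mul_self, one_mul, hk]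
  · rintro ⟨⟨k, δ⟩, rfl⟩
    exact ⟨_, (signedSwap_unitVec i j k ε δ).symm⟩

lemma IsLatRW.measure_hit_zero_unitVec_eq (hQ : IsLatRW ν Q) (u v : Fin ν × ℤˣ) :
    Q (unitVec u) {ω | ∃ n, ω n = 0} = Q (unitVec v) {ω | ∃ n, ω n = 0} := by
  have hmap : signedSwap v.1 u.1 (u.2 * v.2) (unitVec v) = unitVec u := by
    rw [← Prod.mk.eta (p := v), signedSwap_unitVec]
    simp [mul_assoc]
  rw [← hmap, hQ.measure_hit_zero_addEquiv _ (signedSwap_mem_zUnitVecs_iff _ _ _)]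

lemma IsLatRW.measure_return_zero_eq (hQ : IsLatRW ν Q) (v : Fin ν × ℤˣ) :
    Q 0 {ω | ∃ n, 1 ≤ n ∧ ω n = 0} = Q (unitVec v) {ω | ∃ n, ω n = 0} := by
  have hcard : (2 * ν : ℝ≥0∞) ≠ 0 := by simpa using v.1.pos.ne'
  have hshift : {ω : ℕ → ZLat ν | ∃ n, 1 ≤ n ∧ ω n = 0} =
      pathShift ⁻¹' {ω | ∃ n, ω n = 0} := by
    ext ω
    exact ⟨fun ⟨n, hn, h⟩ => ⟨n - 1, by rwa [pathShift, Nat.sub_add_cancel hn]⟩,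
      fun ⟨n, h⟩ => ⟨n + 1, by omega, h⟩⟩
  rw [hshift, ← Measure.map_apply measurable_pathShift measurableSet_hit_zero, hQ.map_pathShift,
    Measure.smul_apply, Measure.finsetSum_apply]
  calc (2 * ν : ℝ≥0∞)⁻¹ • ∑ u, Q (0 + unitVec u) {ω | ∃ n, ω n = 0}
      = (2 * ν : ℝ≥0∞)⁻¹ * (2 * ν * Q (unitVec v) {ω | ∃ n, ω n = 0}) := by
        simp [hQ.measure_hit_zero_unitVec_eq _ v, mul_comm]
    _ = Q (unitVec v) {ω | ∃ n, ω n = 0} := by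
        rw [← mul_assoc, ENNReal.inv_mul_cancel hcard (by finiteness), one_mul]

end LatticeWalk

section Fourier

variable {ν : ℕ} {Q : ZLat ν → Measure (ℕ → ZLat ν)}

/-- The characteristic function of a step of the walk, evaluated at the character `ψ`. -/
noncomputable def stepCharFun (ψ : AddChar (ZLat ν) Circle) : ℂ :=
  (2 * ν : ℂ)⁻¹ * ∑ u, (ψ (unitVec u) : ℂ)

lemma integrable_addChar_apply (ψ : AddChar (ZLat ν) Circle) (n : ℕ)
    (μ : Measure (ℕ → ZLat ν)) [IsFiniteMeasure μ] :
    Integrable (fun ω => (ψ (ω n) : ℂ)) μ :=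
  have hmeas : Measurable fun ω : ℕ → ZLat ν => (ψ (ω n) : ℂ) :=
    (measurable_of_countable fun y : ZLat ν => (ψ y : ℂ)).comp (measurable_pi_apply n)
  .of_bound hmeas.aestronglyMeasurable 1 (ae_of_all _ fun _ => (Circle.norm_coe _).le)

lemma IsLatRW.integral_addChar (hQ : IsLatRW ν Q) (ψ : AddChar (ZLat ν) Circle) (x : ZLat ν)
    (n : ℕ) : ∫ ω, (ψ (ω n) : ℂ) ∂Q x = stepCharFun ψ ^ n * ψ x := by
  have := hQ.1
  induction n generalizing x with
  | zero =>
    have hstart : ∀ᵐ ω ∂Q x, (ψ (ω 0) : ℂ) = ψ x :=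
      (hQ.isMarkovFamily.ae_apply_zero_eq x).mono fun ω hω => by rw [hω]
    simp [integral_congr_ae hstart]
  | succ n ih =>
    calc ∫ ω, (ψ (ω (n + 1)) : ℂ) ∂Q x
        = ∫ ω, (ψ (ω n) : ℂ) ∂(Q x).map pathShift :=
          (integral_map measurable_pathShift.aemeasurable
            (integrable_addChar_apply ψ n _).aestronglyMeasurable).symm
      _ = (2 * ν : ℂ)⁻¹ * ∑ u, ∫ ω, (ψ (ω n) : ℂ) ∂Q (x + unitVec u) := by
          rw [hQ.map_pathShift, integral_smul_measure,
            integral_finsetSum_measure fun u _ => integrable_addChar_apply ψ n _]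
          simp
      _ = stepCharFun ψ ^ (n + 1) * ψ x := by
          simp only [ih, AddChar.map_add_eq_mul, Circle.coe_mul, stepCharFun, ← Finset.mul_sum]
          ring

lemma stepCharFun_eq_sum_re (ψ : AddChar (ZLat ν) Circle) :
    stepCharFun ψ = (ν : ℂ)⁻¹ * ∑ j, ((ψ (Pi.single j 1) : ℂ).re : ℂ) := by
  have hpair (j : Fin ν) : ∑ ε : ℤˣ, (ψ (unitVec (j, ε)) : ℂ) =
      2 * ((ψ (Pi.single j 1) : ℂ).re : ℂ) := by
    have hneg : (Pi.single j (-1) : ZLat ν) = -Pi.single j 1 := Pi.single_neg j 1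
    rw [show (Finset.univ : Finset ℤˣ) = {1, -1} from rfl, Finset.sum_pair (by decide)]
    simp only [unitVec, hneg, AddChar.map_neg_eq_inv, Units.val_one, Units.val_neg]
    rw [Circle.coe_inv_eq_conj, Complex.add_conj, Complex.ofReal_mul, Complex.ofReal_ofNat]
  rw [stepCharFun, Fintype.sum_prod_type]
  simp only [hpair, ← Finset.mul_sum]
  field_simp

lemma norm_stepCharFun_le (ψ : AddChar (ZLat ν) Circle) :
    ‖stepCharFun ψ‖ ≤ Real.exp (-(2 * ν : ℝ)⁻¹ * ∑ j, (ψ (Pi.single j 1) : ℂ).im ^ 2) := by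
  rcases eq_or_ne ν 0 with rfl | hν
  · simp [stepCharFun]
  have habs (z : Circle) : |(z : ℂ).re| ≤ 1 - (z : ℂ).im ^ 2 / 2 := by
    have hz : (z : ℂ).re ^ 2 + (z : ℂ).im ^ 2 = 1 := by
      simpa [Complex.normSq_apply, sq] using Circle.normSq_coe z
    nlinarith [sq_abs (z : ℂ).re, sq_nonneg (|(z : ℂ).re| - 1)]
  calc ‖stepCharFun ψ‖ ≤ (ν : ℝ)⁻¹ * ∑ j, |(ψ (Pi.single j 1) : ℂ).re| := by
        rw [stepCharFun_eq_sum_re, norm_mul, norm_inv, Complex.norm_natCast]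
        gcongr
        exact norm_sum_le_of_le _ fun j _ => by simp
    _ ≤ (ν : ℝ)⁻¹ * ∑ j, (1 - (ψ (Pi.single j 1) : ℂ).im ^ 2 / 2) := by
        gcongr
        exact habs _
    _ = -(2 * ν : ℝ)⁻¹ * ∑ j, (ψ (Pi.single j 1) : ℂ).im ^ 2 + 1 := by
        rw [Finset.sum_sub_distrib, ← Finset.sum_div, Finset.sum_const, Finset.card_univ,
          Fintype.card_fin, nsmul_one]
        field_simp
        ring
    _ ≤ _ := Real.add_one_le_exp _

end Fourier

section Torus

lemma addChar_map_sum {ι A M : Type*} [AddCommMonoid A] [CommMonoid M] (ψ : AddChar A M)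
    (s : Finset ι) (f : ι → A) : ψ (∑ i ∈ s, f i) = ∏ i ∈ s, ψ (f i) :=
  map_prod ψ.toMonoidHom (fun i => Multiplicative.ofAdd (f i)) s

variable {ν N : ℕ} {Q : ZLat ν → Measure (ℕ → ZLat ν)}

/-- The sublattice `Nℤ^ν` of `ℤ^ν`. -/
def sublattice (ν N : ℕ) : Set (ZLat ν) := {y | ∀ i, (N : ℤ) ∣ y i}

variable [NeZero N]

/-- The character of `ℤ^ν` induced by the frequency `k` of the torus `(ℤ/Nℤ)^ν`. -/
noncomputable def torusChar (k : Fin ν → ZMod N) : AddChar (ZLat ν) Circle where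
  toFun y := ZMod.toCircle (∑ j, k j * (y j : ZMod N))
  map_zero_eq_one' := by simp
  map_add_eq_mul' y z := by simp [mul_add, Finset.sum_add_distrib, AddChar.map_add_eq_mul]

lemma torusChar_single_one (k : Fin ν → ZMod N) (j : Fin ν) :
    torusChar k (Pi.single j 1) = ZMod.toCircle (k j) := by
  simp [torusChar, Pi.single_apply]

lemma sum_torusChar (y : ZLat ν) :
    ∑ k : Fin ν → ZMod N, (torusChar k y : ℂ) = if y ∈ sublattice ν N then (N : ℂ) ^ ν else 0 := by
  have hprod (k : Fin ν → ZMod N) :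
      (torusChar k y : ℂ) = ∏ j, ZMod.stdAddChar (k j * (y j : ZMod N)) := by
    rw [← addChar_map_sum]
    rfl
  calc ∑ k : Fin ν → ZMod N, (torusChar k y : ℂ)
      = ∏ j, ∑ t : ZMod N, ZMod.stdAddChar (t * (y j : ZMod N)) := by
        rw [Finset.prod_univ_sum, Fintype.piFinset_univ]
        exact Finset.sum_congr rfl fun k _ => hprod k
    _ = ∏ j, if (N : ℤ) ∣ y j then (N : ℂ) else 0 := by
        simp [AddChar.sum_mulShift _ (ZMod.isPrimitive_stdAddChar N),
          ZMod.intCast_zmod_eq_zero_iff_dvd]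
    _ = _ := by
        rw [Finset.prod_ite_zero, Finset.prod_const, Finset.card_univ, Fintype.card_fin]
        simp only [Finset.mem_univ, forall_const, sublattice, Set.mem_ofPred_eq]
        congr

lemma IsLatRW.measureReal_mem_sublattice_le (hQ : IsLatRW ν Q) (x : ZLat ν) (n : ℕ) :
    (Q x).real {ω | ω n ∈ sublattice ν N} ≤
      ((N : ℝ) ^ ν)⁻¹ * ∑ k : Fin ν → ZMod N, ‖stepCharFun (torusChar k)‖ ^ n := by
  have := hQ.1 x
  have hmeas := measurableSet_apply_mem n (sublattice ν N)
  have hind (ω : ℕ → ZLat ν) : {ω | ω n ∈ sublattice ν N}.indicator (1 : (ℕ → ZLat ν) → ℂ) ω =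
      ((N : ℂ) ^ ν)⁻¹ * ∑ k : Fin ν → ZMod N, (torusChar k (ω n) : ℂ) := by
    simp [sum_torusChar, Set.indicator_apply, NeZero.ne N]
  have hreal : (((Q x).real {ω | ω n ∈ sublattice ν N} : ℝ) : ℂ) =
      ((N : ℂ) ^ ν)⁻¹ * ∑ k : Fin ν → ZMod N, stepCharFun (torusChar k) ^ n * torusChar k x := by
    rw [← mul_one ((Q x).real _ : ℂ), ← Complex.real_smul, ← integral_indicator_const _ hmeas]
    calc ∫ ω, {ω | ω n ∈ sublattice ν N}.indicator (fun _ => (1 : ℂ)) ω ∂Q x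
        = ∫ ω, ((N : ℂ) ^ ν)⁻¹ * ∑ k : Fin ν → ZMod N, (torusChar k (ω n) : ℂ) ∂Q x :=
          integral_congr_ae (ae_of_all _ hind)
      _ = _ := by
          rw [integral_const_mul, integral_finsetSum _ fun k _ => integrable_addChar_apply _ n _]
          simp only [hQ.integral_addChar]
  calc (Q x).real {ω | ω n ∈ sublattice ν N}
      = ‖((N : ℂ) ^ ν)⁻¹ *
          ∑ k : Fin ν → ZMod N, stepCharFun (torusChar k) ^ n * torusChar k x‖ := by
        rw [← hreal, Complex.norm_of_nonneg measureReal_nonneg]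
    _ ≤ _ := by
        rw [norm_mul, norm_inv, norm_pow, Complex.norm_natCast]
        gcongr
        exact norm_sum_le_of_le _ fun k _ => by rw [norm_mul, norm_pow, Circle.norm_coe, mul_one]

lemma IsLatRW.measureReal_mem_sublattice_le_pow (hQ : IsLatRW ν Q) (x : ZLat ν) (n : ℕ) :
    (Q x).real {ω | ω n ∈ sublattice ν N} ≤
      ((N : ℝ)⁻¹ * ∑ t : ZMod N, Real.exp (-(n / (2 * ν)) * (ZMod.toCircle t : ℂ).im ^ 2)) ^ ν := by
  have hterm (k : Fin ν → ZMod N) : ‖stepCharFun (torusChar k)‖ ^ n ≤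
      ∏ j, Real.exp (-(n / (2 * ν)) * (ZMod.toCircle (k j) : ℂ).im ^ 2) := by
    calc ‖stepCharFun (torusChar k)‖ ^ n
        ≤ Real.exp (-(2 * ν : ℝ)⁻¹ * ∑ j, (ZMod.toCircle (k j) : ℂ).im ^ 2) ^ n := by
          gcongr
          simpa only [torusChar_single_one] using norm_stepCharFun_le (torusChar k)
      _ = _ := by
          rw [← Real.exp_nat_mul, ← Real.exp_sum, ← Finset.mul_sum]
          ring_nf
  calc (Q x).real {ω | ω n ∈ sublattice ν N}
      ≤ ((N : ℝ) ^ ν)⁻¹ * ∑ k : Fin ν → ZMod N,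
          ∏ j, Real.exp (-(n / (2 * ν)) * (ZMod.toCircle (k j) : ℂ).im ^ 2) := by
        grw [hQ.measureReal_mem_sublattice_le, Finset.sum_le_sum fun k _ => hterm k]
    _ = _ := by
        rw [mul_pow, inv_pow, ← Fin.prod_const ν (∑ t : ZMod N, _), Finset.prod_univ_sum,
          Fintype.piFinset_univ]

end Torus

section GaussianSum

open Real

lemma sum_exp_neg_mul_sq_le {b : ℝ} (hb : 0 < b) (L : ℕ) :
    ∑ m ∈ Finset.range (L + 1), exp (-b * (m : ℝ) ^ 2) ≤ 1 + √(π / b) / 2 := by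
  have hanti : AntitoneOn (fun x : ℝ => exp (-b * x ^ 2)) (Set.Icc (0 : ℝ) (0 + L)) :=
    fun x hx y _ hxy => by
      have := hx.1
      dsimp only
      gcongr exp ?_
      nlinarith [pow_le_pow_left₀ this hxy 2]
  have htail : ∑ m ∈ Finset.range L, exp (-b * ((m + 1 : ℕ) : ℝ) ^ 2) ≤ √(π / b) / 2 :=
    calc ∑ m ∈ Finset.range L, exp (-b * ((m + 1 : ℕ) : ℝ) ^ 2)
        ≤ ∫ x in (0 : ℝ)..L, exp (-b * x ^ 2) := by simpa using hanti.sum_le_integral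
      _ ≤ ∫ x in Set.Ioi (0 : ℝ), exp (-b * x ^ 2) := by
          rw [intervalIntegral.integral_of_le L.cast_nonneg]
          exact setIntegral_mono_set (integrable_exp_neg_mul_sq hb).integrableOn
            (ae_of_all _ fun _ => (exp_pos _).le) Set.Ioc_subset_Ioi_self.eventuallyLE
      _ = √(π / b) / 2 := integral_gaussian_Ioi b
  rw [Finset.sum_range_succ']
  simpa [add_comm] using htail

lemma exp_neg_mul_sin_sq_le {a θ : ℝ} (ha : 0 ≤ a) (h0 : 0 ≤ θ) (hπ : θ ≤ π) :
    exp (-a * sin θ ^ 2) ≤ exp (-a * (2 / π * θ) ^ 2) + exp (-a * (2 / π * (π - θ)) ^ 2) := by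
  have hJordan {t : ℝ} (ht : 0 ≤ t) (ht' : t ≤ π / 2) :
      exp (-a * sin t ^ 2) ≤ exp (-a * (2 / π * t) ^ 2) := by
    have := mul_le_sin ht ht'
    have hsq : (2 / π * t) ^ 2 ≤ sin t ^ 2 := by gcongr
    gcongr exp ?_
    nlinarith
  rcases le_total θ (π / 2) with h | h
  · linarith [hJordan h0 h, exp_pos (-a * (2 / π * (π - θ)) ^ 2)]
  · have := hJordan (t := π - θ) (by linarith) (by linarith)
    rw [sin_pi_sub] at this
    linarith [exp_pos (-a * (2 / π * θ) ^ 2)]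

lemma sum_exp_neg_mul_sin_sq_le {a : ℝ} (ha : 0 < a) (N : ℕ) :
    ∑ j ∈ Finset.range N, exp (-a * sin (π * j / N) ^ 2) ≤ 2 + N / 2 * √(π / a) := by
  rcases N.eq_zero_or_pos with rfl | hN
  · simp
  have hN' : (0 : ℝ) < N := mod_cast hN
  let b := 4 * a / N ^ 2
  have hb : 0 < b := by positivity
  have hsqrt : √(π / b) = N / 2 * √(π / a) := by
    rw [show π / b = (N / 2) ^ 2 * (π / a) by simp only [b]; field_simp; ring,
      sqrt_mul (by positivity), sqrt_sq (by positivity)]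
  have hterm (j : ℕ) (hj : j ≤ N) : exp (-a * sin (π * j / N) ^ 2) ≤
      exp (-b * (j : ℝ) ^ 2) + exp (-b * ((N - j : ℕ) : ℝ) ^ 2) := by
    have hj' : (j : ℝ) ≤ N := mod_cast hj
    convert exp_neg_mul_sin_sq_le ha.le (θ := π * j / N) (by positivity)
      ((div_le_iff₀ hN').2 (by gcongr)) using 3
    · simp only [b]; field_simp; ring
    · rw [Nat.cast_sub hj]; simp only [b]; field_simp; ring
  calc ∑ j ∈ Finset.range N, exp (-a * sin (π * j / N) ^ 2)
      ≤ ∑ j ∈ Finset.range (N + 1), exp (-a * sin (π * j / N) ^ 2) :=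
        Finset.sum_le_sum_of_subset_of_nonneg (Finset.range_subset_range.2 N.le_succ)
          fun _ _ _ => (exp_pos _).le
    _ ≤ ∑ j ∈ Finset.range (N + 1),
          (exp (-b * (j : ℝ) ^ 2) + exp (-b * ((N - j : ℕ) : ℝ) ^ 2)) :=
        Finset.sum_le_sum fun j hj => hterm j (Finset.mem_range_succ_iff.1 hj)
    _ = 2 * ∑ m ∈ Finset.range (N + 1), exp (-b * (m : ℝ) ^ 2) := by
        have hreflect := Finset.sum_range_reflect (fun m : ℕ => exp (-b * (m : ℝ) ^ 2)) (N + 1)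
        rw [Nat.add_sub_cancel] at hreflect
        rw [Finset.sum_add_distrib, hreflect, two_mul]
    _ ≤ 2 + N / 2 * √(π / a) := by linarith [sum_exp_neg_mul_sq_le hb N]

lemma sum_zmod_val {R : Type*} [AddCommMonoid R] {N : ℕ} [NeZero N] (f : ℕ → R) :
    ∑ t : ZMod N, f t.val = ∑ j ∈ Finset.range N, f j := by
  obtain ⟨k, rfl⟩ := Nat.exists_eq_succ_of_ne_zero (NeZero.ne N)
  exact Fin.sum_univ_eq_sum_range f (k + 1)

lemma sum_exp_neg_mul_im_toCircle_sq_le {a : ℝ} (ha : 0 < a) (N : ℕ) [NeZero N] :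
    ∑ t : ZMod N, exp (-a * (ZMod.toCircle t : ℂ).im ^ 2) ≤ 4 + N * √(π / a) := by
  have hN : (N : ℝ) ≠ 0 := mod_cast NeZero.ne N
  let f : ℕ → ℝ := fun j => exp (-a * sin (π * j / N) ^ 2)
  have hf : ∀ t : ZMod N, exp (-a * (ZMod.toCircle t : ℂ).im ^ 2) = f (2 * t.val) := fun t => by
    rw [ZMod.toCircle_eq_circleExp, Circle.coe_exp, Complex.exp_ofReal_mul_I_im]
    simp only [f]
    congr 4
    push_cast
    ring
  have hperiodic (j : ℕ) : f (N + j) = f j := by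
    have : π * ((N + j : ℕ) : ℝ) / N = π * j / N + π := by
      push_cast; field_simp; ring
    simp only [f]
    rw [this, sin_add_pi, neg_sq]
  -- Every second point of the grid `π j / N`, `j < 2N`, is a frequency, and `sin²` has period `π`.
  calc ∑ t : ZMod N, exp (-a * (ZMod.toCircle t : ℂ).im ^ 2)
      = ∑ j ∈ Finset.range N, f (2 * j) := by
        rw [← sum_zmod_val]
        exact Finset.sum_congr rfl fun t _ => hf t
    _ = ∑ j ∈ (Finset.range N).image (2 * ·), f j :=
        (Finset.sum_image fun i _ j _ h => by simpa using h).symm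
    _ ≤ ∑ j ∈ Finset.range (N + N), f j :=
        Finset.sum_le_sum_of_subset_of_nonneg (by grind) fun _ _ _ => (exp_pos _).le
    _ = 2 * ∑ j ∈ Finset.range N, f j := by
        simp only [Finset.sum_range_add, hperiodic, two_mul]
    _ ≤ 4 + N * √(π / a) := by linarith [sum_exp_neg_mul_sin_sq_le ha N]

end GaussianSum

section Hitting

open Real Topology

lemma tendsto_measureReal_iUnion_of_dominated {Ω ι κ : Type*} [MeasurableSpace Ω] [Countable κ]
    {μ : Measure Ω} [IsFiniteMeasure μ] {l : Filter ι} {A : ι → κ → Set Ω} {b : κ → ℝ}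
    (hb : Summable b) (hle : ∀ i k, μ.real (A i k) ≤ b k)
    (hlim : ∀ k, Tendsto (fun i => μ (A i k)) l (𝓝 0)) :
    Tendsto (fun i => μ.real (⋃ k, A i k)) l (𝓝 0) := by
  have hsum (i : ι) : Summable fun k => μ.real (A i k) :=
    hb.of_nonneg_of_le (fun _ => measureReal_nonneg) (hle i)
  have hunion (i : ι) : μ.real (⋃ k, A i k) ≤ ∑' k, μ.real (A i k) := by
    refine ENNReal.toReal_le_of_le_ofReal (tsum_nonneg fun _ => measureReal_nonneg) ?_
    rw [ENNReal.ofReal_tsum_of_nonneg (fun _ => measureReal_nonneg) (hsum i)]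
    exact (measure_iUnion_le (A i)).trans_eq
      (tsum_congr fun k => (ofReal_measureReal (measure_ne_top μ _)).symm)
  have htsum : Tendsto (fun i => ∑' k, μ.real (A i k)) l (𝓝 0) := by
    rw [← tsum_zero (α := ℝ) (β := κ)]
    refine tendsto_tsum_of_dominated_convergence hb (fun k => ?_) (.of_forall fun i k => ?_)
    · exact (ENNReal.tendsto_toReal ENNReal.zero_ne_top).comp (hlim k)
    · rw [Real.norm_of_nonneg measureReal_nonneg]
      exact hle i k
  exact squeeze_zero (fun _ => measureReal_nonneg) hunion htsum

variable {ν : ℕ} {Q : ZLat ν → Measure (ℕ → ZLat ν)}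

lemma eventually_notMem_sublattice {y : ZLat ν} (hy : y ≠ 0) :
    ∀ᶠ N in atTop, y ∉ sublattice ν N := by
  obtain ⟨i, hi⟩ := Function.ne_iff.1 hy
  filter_upwards [eventually_gt_atTop (y i).natAbs] with N hN hmem
  exact hi (Int.eq_zero_of_abs_lt_dvd (hmem i) (by rw [Int.abs_eq_natAbs]; exact_mod_cast hN))

lemma tendsto_measure_apply_mem_sublattice (μ : Measure (ℕ → ZLat ν)) [IsFiniteMeasure μ]
    (n : ℕ) :
    Tendsto (fun N => μ {ω | ω n ∈ sublattice ν N \ {0}}) atTop (𝓝 0) := by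
  rw [← measure_empty (μ := μ)]
  refine tendsto_measure_of_tendsto_indicator_of_isFiniteMeasure atTop μ
    (fun N => measurableSet_apply_mem n _) fun ω => ?_
  by_cases hω : ω n = 0
  · simp [hω]
  · filter_upwards [eventually_notMem_sublattice hω] with N hN
    simp [hN]

lemma IsLatRW.measureReal_mem_sublattice_le_of_lt (hQ : IsLatRW ν Q) (hν : ν ≠ 0) (x : ZLat ν)
    {M N n : ℕ} (hn : n ≠ 0) (hnN : n < M * N ^ 2) :
    (Q x).real {ω | ω n ∈ sublattice ν N} ≤ ((4 * √M + √(2 * π * ν)) / √n) ^ ν := by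
  have : NeZero N := ⟨by rintro rfl; simp at hnN⟩
  have hN : (0 : ℝ) < N := mod_cast Nat.pos_of_neZero N
  have hn' : (0 : ℝ) < n := mod_cast hn.bot_lt
  have : (0 : ℝ) < ν := mod_cast hν.bot_lt
  have hsqrt : √n ≤ √M * N := by
    rw [← sqrt_sq hN.le, ← sqrt_mul M.cast_nonneg]
    exact sqrt_le_sqrt (mod_cast hnN.le)
  have hgauss : √(π / (n / (2 * ν))) = √(2 * π * ν) / √n := by
    rw [← sqrt_div (by positivity)]
    congr 1
    field_simp
  refine (hQ.measureReal_mem_sublattice_le_pow x n).trans ?_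
  gcongr
  calc (N : ℝ)⁻¹ * ∑ t : ZMod N, exp (-(n / (2 * ν)) * (ZMod.toCircle t : ℂ).im ^ 2)
      ≤ (N : ℝ)⁻¹ * (4 + N * √(π / (n / (2 * ν)))) := by
        gcongr
        exact sum_exp_neg_mul_im_toCircle_sq_le (by positivity) N
    _ = 4 / N + √(2 * π * ν) / √n := by
        rw [hgauss]
        field_simp
    _ ≤ 4 * √M / √n + √(2 * π * ν) / √n := by
        gcongr ?_ + _
        rw [div_le_div_iff₀ hN (sqrt_pos.2 hn')]
        linarith
    _ = _ := (add_div _ _ _).symm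

lemma summable_div_sqrt_pow (hν : 3 ≤ ν) (C : ℝ) : Summable fun n : ℕ => (C / √n) ^ ν := by
  have hterm (n : ℕ) : (C / √n) ^ ν = C ^ ν * (1 / (n : ℝ) ^ (ν / 2 : ℝ)) := by
    rw [div_pow, sqrt_eq_rpow, ← rpow_mul_natCast n.cast_nonneg, mul_one_div]
    ring_nf
  simp only [hterm]
  have : (3 : ℝ) ≤ ν := mod_cast hν
  exact (summable_one_div_nat_rpow.2 (by linarith)).mul_left _

lemma IsLatRW.tendsto_measureReal_hit_sublattice_diff_zero (hQ : IsLatRW ν Q) (hν : 3 ≤ ν)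
    (x : ZLat ν) (M : ℕ) :
    Tendsto (fun N => (Q x).real {ω | ∃ n < M * N ^ 2, ω n ∈ sublattice ν N \ {0}}) atTop
      (𝓝 0) := by
  have := hQ.1 x
  let A (N n : ℕ) : Set (ℕ → ZLat ν) := {ω | n < M * N ^ 2 ∧ ω n ∈ sublattice ν N \ {0}}
  let b : ℕ → ℝ := fun n => ((4 * √M + √(2 * π * ν)) / √n) ^ ν
  -- Time `0` is treated apart because `b 0 = 0`: division by `√0` gives `0`.
  have hle (N n : ℕ) : (Q x).real (A N n) ≤ Function.update b 0 1 n := by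
    rcases eq_or_ne n 0 with rfl | hn
    · simp [measureReal_le_one]
    rw [Function.update_of_ne hn]
    by_cases hnN : n < M * N ^ 2
    · exact (measureReal_mono fun ω hω => hω.2.1).trans
        (hQ.measureReal_mem_sublattice_le_of_lt (by omega) x hn hnN)
    · simp only [A, hnN, false_and, Set.ofPred_false, measureReal_empty]
      positivity
  have hlim (n : ℕ) : Tendsto (fun N => Q x (A N n)) atTop (𝓝 0) :=
    tendsto_of_tendsto_of_tendsto_of_le_of_le tendsto_const_nhds
      (tendsto_measure_apply_mem_sublattice (Q x) n) (fun _ => zero_le)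
      fun N => measure_mono fun ω hω => hω.2
  have hunion (N : ℕ) : {ω | ∃ n < M * N ^ 2, ω n ∈ sublattice ν N \ {0}} = ⋃ n, A N n := by
    ext ω
    simp [A]
  simp only [hunion]
  exact tendsto_measureReal_iUnion_of_dominated ((summable_div_sqrt_pow hν _).update 0 1) hle hlim

lemma IsLatRW.limsup_measureReal_hit_sublattice_le (hQ : IsLatRW ν Q) (hν : 3 ≤ ν) (x : ZLat ν)
    (M : ℕ) :
    limsup (fun N => (Q x).real {ω | ∃ n < M * N ^ 2, ω n ∈ sublattice ν N}) atTop ≤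
      (Q x).real {ω | ∃ n, ω n = 0} := by
  have := hQ.1 x
  let p (N : ℕ) : ℝ := (Q x).real {ω | ∃ n < M * N ^ 2, ω n ∈ sublattice ν N \ {0}}
  have hp : Tendsto (fun N => (Q x).real {ω | ∃ n, ω n = 0} + p N) atTop
      (𝓝 ((Q x).real {ω | ∃ n, ω n = 0})) := by
    simpa only [add_zero] using (hQ.tendsto_measureReal_hit_sublattice_diff_zero hν x M).const_add _
  have hsplit (N : ℕ) : (Q x).real {ω | ∃ n < M * N ^ 2, ω n ∈ sublattice ν N} ≤
      (Q x).real {ω | ∃ n, ω n = 0} + p N := by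
    refine (measureReal_mono ?_).trans (measureReal_union_le _ _)
    rintro ω ⟨n, hn, hω⟩
    by_cases h0 : ω n = 0
    exacts [Or.inl ⟨n, h0⟩, Or.inr ⟨n, hn, hω, h0⟩]
  exact (limsup_le_limsup (.of_forall hsplit)
    (isCoboundedUnder_le_of_le _ (x := 0) fun _ => measureReal_nonneg)
    hp.isBoundedUnder_le).trans_eq hp.limsup_eq

end Hitting

/-- **(1.32).** For `ν ≥ 3` and `M ≥ 1`, for simple random walk on `ℤ^ν` started at
`e₁`, `limsup_N Q_{e₁}[H_{Nℤ^ν} < M N²] ≤ q(ν)`. -/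
theorem statement_17 (ν : ℕ) (hν : 3 ≤ ν) (M : ℕ) (hM : 1 ≤ M)
    (Q : ZLat ν → Measure (ℕ → ZLat ν)) (hQ : IsLatRW ν Q) :
    limsup (fun N : ℕ =>
        ((Q (Pi.single (⟨0, by omega⟩ : Fin ν) 1))
          {ω | ∃ n : ℕ, n < M * N ^ 2 ∧ ∀ i, (N : ℤ) ∣ ω n i}).toReal) atTop
      ≤ retProb ν Q := by
  rw [retProb, hQ.measure_return_zero_eq (⟨0, by omega⟩, 1)]
  exact hQ.limsup_measureReal_hit_sublattice_le hν _ M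

end DiscCyl
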